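/- Fix an integer n ≥ 1. There exist constants 0 < c ≤ C < ∞ depending only on n such that c · w(x) ≤ M(w)(x) ≤ C · w(x) for almost every x ∈ supp(w). -/

import Mathlib

open MeasureTheory Set ENNReal

noncomputable section

/-- The half-open axis-parallel cube with corner `a` and side length `l`. -/
def Cube (n : ℕ) (a : Fin n → ℝ) (l : ℝ) : Set (Fin n → ℝ) :=
  Set.univ.pi fun i => Set.Ico (a i) (a i + l)

/-- The uncentered Hardy–Littlewood maximal function over axis-parallel cubes:
`Mg(x) = sup_{Q ∋ x} |Q|⁻¹ ∫_Q g`. -/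
def MaxFn {n : ℕ} (g : (Fin n → ℝ) → ℝ≥0∞) (x : Fin n → ℝ) : ℝ≥0∞ :=
  ⨆ (a : Fin n → ℝ) (l : ℝ) (_ : 0 < l) (_ : x ∈ Cube n a l),
    (volume (Cube n a l))⁻¹ * ∫⁻ y in Cube n a l, g y

/-- The cube of the sparse family `S` with parameters `k, N`:
`[0, 2^{-N})^n` for `k = 0` and `[2^k, 2^k + 2^{-N})^n` for `k ≥ 1`. -/
def sCube (n k N : ℕ) : Set (Fin n → ℝ) :=
  Cube n (fun _ => if k = 0 then 0 else (2:ℝ)^k) ((2:ℝ)^(-(N:ℤ)))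

/-- The sparse operator `T_S g = Σ_{Q ∈ S} (|Q|⁻¹ ∫_Q g) 1_Q`. -/
def TS {n : ℕ} (g : (Fin n → ℝ) → ℝ≥0∞) (x : Fin n → ℝ) : ℝ≥0∞ :=
  ∑' q : ℕ × ℕ,
    (sCube n q.1 q.2).indicator
      (fun _ => (volume (sCube n q.1 q.2))⁻¹ * ∫⁻ y in sCube n q.1 q.2, g y) x

/-- The `j`-th digit (for `j ≥ 1`) of `t ∈ [0,1)` in base `2^k`, using the expansion
which is not eventually constant `2^k - 1`. -/
def digit (k j : ℕ) (t : ℝ) : ℤ := ⌊t * 2^(k*j)⌋ % 2^k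

/-- `Ω_m(k) ⊆ [0,1)^n`: the points all of whose coordinates have base-`2^k` digits
in `{0, …, 2^{k-1}-1}` for `1 ≤ j ≤ m-1`, with `m`-th digit equal to `2^{k-1}`. -/
def Omega (n k m : ℕ) : Set (Fin n → ℝ) :=
  {x | (∀ i, x i ∈ Set.Ico (0:ℝ) 1) ∧
    ∀ i, (∀ j, 1 ≤ j → j < m → digit k j (x i) < 2^(k-1)) ∧
      digit k m (x i) = 2^(k-1)}

/-- The weight `w_k = Σ_{m ≥ 1} (2^{kn}/(2^{(k-1)n}+1))^m 1_{Ω_m(k)}`. -/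
def wk (n k : ℕ) : (Fin n → ℝ) → ℝ≥0∞ := fun x =>
  ∑' m : ℕ,
    (Omega n k (m+1)).indicator
      (fun _ => ((2:ℝ≥0∞)^(k*n) / ((2:ℝ≥0∞)^((k-1)*n) + 1))^(m+1)) x

/-- `Q_1^m(k) = [2^{-k(m-1)-1}, 2^{-k(m-1)-1} + 2^{-km})^n`. -/
def Q1 (n k m : ℕ) : Set (Fin n → ℝ) :=
  Cube n (fun _ => (2:ℝ)^(-(k*(m-1) : ℤ) - 1)) ((2:ℝ)^(-(k*m : ℤ)))

/-- `Γ(k) = ⋃_{m ≥ 3} Q_1^m(k)`. -/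
def Gamma (n k : ℕ) : Set (Fin n → ℝ) := ⋃ m : ℕ, Q1 n k (m+3)

/-- `A_k = 2^{(k-1)n} (2^{(k-1)n}+1)^2`. -/
def Ak (n k : ℕ) : ℝ≥0∞ := 2^((k-1)*n) * (2^((k-1)*n) + 1)^2

/-- The weight `w(x) = Σ_{k ≥ 3} A_k w_k(x - 2⃗^k) 1_{Γ(k)}(x - 2⃗^k)`. -/
def bigW (n : ℕ) : (Fin n → ℝ) → ℝ≥0∞ := fun x =>
  ∑' k : ℕ,
    (Gamma n (k+3)).indicator (fun z => Ak n (k+3) * wk n (k+3) z)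
      (fun i => x i - (2:ℝ)^(k+3))

/-- The test function `f(x) = Σ_{k ≥ 3} k^{-ε} A_k w_k(x - 2⃗^k)`. -/
def bigF (n : ℕ) (ε : ℝ) : (Fin n → ℝ) → ℝ≥0∞ := fun x =>
  ∑' k : ℕ,
    ((k+3 : ℝ≥0∞) ^ (-ε)) * Ak n (k+3) * wk n (k+3) (fun i => x i - (2:ℝ)^(k+3))

/-- `T` is bounded from `L^p(v)` to `L^p(u)` (for nonnegative functions, which are
required to be supported in `supp v`): there is a finite constant `C` with
`‖Tf‖_{L^p(u)} ≤ C ‖f‖_{L^p(v)}` for all `f ∈ L^p(v)`. -/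
def BddOn {n : ℕ} (T : ((Fin n → ℝ) → ℝ≥0∞) → (Fin n → ℝ) → ℝ≥0∞)
    (p : ℝ) (v u : (Fin n → ℝ) → ℝ≥0∞) : Prop :=
  ∃ C : ℝ≥0∞, C ≠ ∞ ∧ ∀ f : (Fin n → ℝ) → ℝ≥0∞, Measurable f →
    (∀ x, v x = 0 → f x = 0) → (∫⁻ x, f x ^ p * v x) < ∞ →
    ∫⁻ x, T f x ^ p * u x ≤ C ^ p * ∫⁻ x, f x ^ p * v x

/-- The dual weight `u^{1-p'} 1_{supp u}`. -/
def dualW {n : ℕ} (u : (Fin n → ℝ) → ℝ≥0∞) (q : ℝ) : (Fin n → ℝ) → ℝ≥0∞ :=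
  fun x => if u x = 0 then 0 else u x ^ (1 - q)

/-!
The weight `w` is constant on each cube `2⃗^k + Q_1^m(k)`, `k, m ≥ 3`, and vanishes off their union;
averaging over the cube that contains `x` gives `w x ≤ Mw x`. For the upper bound let `Q` be a cube
containing `x ∈ 2⃗^k + Q_1^i(k)`. The masses of `w` on the cubes with parameter `k` at least halve
from `m` to `m + 1`, so those meeting `Q` carry at most twice the mass of the largest of them, `P`.
If `Q` meets a second one, then the side of `P` is at most the distance between the two, so
`|P| ≤ |Q|`; since the values of `w` increase with `m`, the total is at most `2 w(x) |Q|`. For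
`k' ≠ k` the cubes with parameter `k'` have total mass at most `2`, and `Q` can meet one of them
only if its side is at least `2^(k'-3)`, so these contribute at most `∑ 2 * 2^(3-k') |Q| = 4 |Q|`
in total. As `w x ≥ 1`, this is at most `4 w(x) |Q|`.
-/

open scoped Function

section Sums

lemma tsum_indicator_of_mem {ι α : Type*} {s : ι → Set α} (hs : Pairwise (Disjoint on s))
    (f : ι → α → ℝ≥0∞) {i : ι} {x : α} (hx : x ∈ s i) :
    ∑' j, (s j).indicator (f j) x = f i x := by
  rw [tsum_eq_single i, indicator_of_mem hx]
  exact fun j hj => indicator_of_notMem (fun hxj => (hs hj).le_bot ⟨hxj, hx⟩) _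

lemma tsum_le_two_mul_of_halving {c f : ℕ → ℝ≥0∞} {N : ℕ} (hc : ∀ j, c (j + 1) ≤ 2⁻¹ * c j)
    (hfc : ∀ j, f j ≤ c j) (hf : ∀ j < N, f j = 0) : ∑' j, f j ≤ 2 * c N := by
  have hdecay (j : ℕ) : c (j + N) ≤ 2⁻¹ ^ j * c N := by
    induction j with
    | zero => simp
    | succ j ih =>
      calc c (j + 1 + N) = c (j + N + 1) := by rw [add_right_comm]
        _ ≤ 2⁻¹ * (2⁻¹ ^ j * c N) := (hc _).trans (by gcongr)
        _ = 2⁻¹ ^ (j + 1) * c N := by rw [pow_succ', mul_assoc]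
  calc ∑' j, f j = ∑' j, f (j + N) := by
        rw [← Summable.sum_add_tsum_nat_add' (k := N) ENNReal.summable,
          Finset.sum_eq_zero fun j hj => hf j (Finset.mem_range.1 hj), zero_add]
    _ ≤ ∑' j, 2⁻¹ ^ j * c N := ENNReal.tsum_le_tsum fun j => (hfc _).trans (hdecay j)
    _ = 2 * c N := by
        rw [ENNReal.tsum_mul_right, ENNReal.tsum_geometric, ENNReal.one_sub_inv_two, inv_inv]

lemma tsum_le_add_tsum_of_forall_ne {ι : Type*} {f g : ι → ℝ≥0∞} (b : ι)
    (h : ∀ i ≠ b, f i ≤ g i) : ∑' i, f i ≤ f b + ∑' i, g i := by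
  classical
  rw [ENNReal.tsum_eq_add_tsum_ite b]
  gcongr with i
  split_ifs with hi
  exacts [zero_le, h i hi]

end Sums

section Cubes

variable {n : ℕ} {a x y : Fin n → ℝ} {l : ℝ}

lemma measurableSet_cube (a : Fin n → ℝ) (l : ℝ) : MeasurableSet (Cube n a l) :=
  MeasurableSet.univ_pi fun _ => measurableSet_Ico

lemma volume_cube (a : Fin n → ℝ) (l : ℝ) : volume (Cube n a l) = ENNReal.ofReal l ^ n := by
  simp [Cube, Real.volume_pi_Ico]

lemma dist_le_of_mem_cube (hl : 0 ≤ l) (hx : x ∈ Cube n a l) (hy : y ∈ Cube n a l) :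
    dist x y ≤ l := by
  refine (dist_pi_le_iff hl).2 fun i => ?_
  have hxi := hx i (mem_univ i)
  have hyi := hy i (mem_univ i)
  rw [mem_Ico] at hxi hyi
  rw [Real.dist_eq, abs_le]
  constructor <;> linarith

lemma ofReal_pow_le_volume_cube {r : ℝ} (hl : 0 ≤ l) (hx : x ∈ Cube n a l) (hy : y ∈ Cube n a l)
    (hr : r ≤ dist x y) : ENNReal.ofReal r ^ n ≤ volume (Cube n a l) := by
  rw [volume_cube]
  gcongr
  exact hr.trans (dist_le_of_mem_cube hl hx hy)

lemma maxFn_le {g : (Fin n → ℝ) → ℝ≥0∞} {C : ℝ≥0∞}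
    (h : ∀ a l, 0 < l → x ∈ Cube n a l → ∫⁻ y in Cube n a l, g y ≤ C * volume (Cube n a l)) :
    MaxFn g x ≤ C := by
  refine iSup_le fun a => iSup_le fun l => iSup_le fun hl => iSup_le fun hx => ?_
  rw [mul_comm, ← div_eq_mul_inv]
  exact ENNReal.div_le_of_le_mul (h a l hl hx)

lemma le_maxFn_of_eqOn_cube {g : (Fin n → ℝ) → ℝ≥0∞} {v : ℝ≥0∞} (hl : 0 < l)
    (hx : x ∈ Cube n a l) (hg : EqOn g (fun _ => v) (Cube n a l)) : v ≤ MaxFn g x := by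
  have hpos : volume (Cube n a l) ≠ 0 := by simpa [volume_cube] using fun h => absurd h hl.not_ge
  have hfin : volume (Cube n a l) ≠ ∞ := by rw [volume_cube]; finiteness
  calc v = (volume (Cube n a l))⁻¹ * ∫⁻ y in Cube n a l, g y := by
        rw [setLIntegral_congr_fun (measurableSet_cube a l) hg, setLIntegral_const, mul_left_comm,
          ENNReal.inv_mul_cancel hpos hfin, mul_one]
    _ ≤ MaxFn g x :=
        le_iSup_of_le a <| le_iSup_of_le l <| le_iSup_of_le hl <| le_iSup_of_le hx le_rfl

end Cubes

section Digits

variable {n k m : ℕ} {z : Fin n → ℝ}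

lemma digit_eq_of_mem_Ico {j : ℕ} {t : ℝ} {d : ℤ} (hd : 0 ≤ d) (hd' : d < 2 ^ k)
    (ht : t * 2 ^ (k * j) ∈ Ico (d : ℝ) (d + 1)) : digit k j t = d := by
  rw [digit, Int.floor_eq_iff.2 ht, Int.emod_eq_of_lt hd hd']

lemma two_pow_sub_one_eq_half (hk : 1 ≤ k) : (2 : ℝ) ^ (k - 1) = 2 ^ k / 2 := by
  rw [pow_sub₀ _ two_ne_zero hk, pow_one, div_eq_mul_inv]

lemma mem_Q1_iff :
    z ∈ Q1 n k m ↔ ∀ i, z i * 2 ^ (k * m) ∈ Ico ((2 : ℝ) ^ k / 2) (2 ^ k / 2 + 1) := by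
  have hs : (0 : ℝ) < 2 ^ (k * m) := by positivity
  have hside : (2 : ℝ) ^ (-(k * m : ℤ)) = 1 / 2 ^ (k * m) := by
    rw [zpow_neg, one_div]
    exact_mod_cast rfl
  have hcorner : (2 : ℝ) ^ (-(k * (m - 1) : ℤ) - 1) = 2 ^ k / 2 / 2 ^ (k * m) := by
    have : -(k * (m - 1) : ℤ) - 1 = k - 1 + -(k * m) := by ring
    rw [this, zpow_add₀ two_ne_zero, hside, zpow_sub_one₀ two_ne_zero, zpow_natCast]
    ring
  simp only [Q1, Cube, mem_univ_pi, hside, hcorner, ← add_div, mem_Ico, div_le_iff₀ hs,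
    lt_div_iff₀ hs]

lemma mul_two_pow_mem_Ico_of_mem_Q1 {j : ℕ} (hk : 1 ≤ k) (hj : j < m) (hz : z ∈ Q1 n k m)
    (i : Fin n) : z i * 2 ^ (k * j) ∈ Ico (0 : ℝ) 1 := by
  obtain ⟨hlow, hup⟩ := mem_Q1_iff.1 hz i
  have hz0 : 0 ≤ z i := nonneg_of_mul_nonneg_left (le_trans (by positivity) hlow) (by positivity)
  refine ⟨by positivity, lt_of_mul_lt_mul_right ?_ (by positivity : (0 : ℝ) ≤ 2 ^ k)⟩
  have hk2 : (2 : ℝ) ≤ 2 ^ k := le_self_pow₀ one_le_two (by omega)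
  calc z i * 2 ^ (k * j) * 2 ^ k = z i * 2 ^ (k * (j + 1)) := by ring
    _ ≤ z i * 2 ^ (k * m) := by gcongr; exacts [one_le_two, hj]
    _ < 2 ^ k / 2 + 1 := hup
    _ ≤ 1 * 2 ^ k := by linarith

lemma digit_self_of_mem_Q1 (hk : 1 ≤ k) (hz : z ∈ Q1 n k m) (i : Fin n) :
    digit k m (z i) = 2 ^ (k - 1) := by
  refine digit_eq_of_mem_Ico (by positivity) (pow_lt_pow_right₀ one_lt_two (by omega)) ?_
  push_cast
  rw [two_pow_sub_one_eq_half hk]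
  exact mem_Q1_iff.1 hz i

lemma digit_eq_zero_of_mem_Q1 {j : ℕ} (hk : 1 ≤ k) (hj : j < m) (hz : z ∈ Q1 n k m)
    (i : Fin n) : digit k j (z i) = 0 :=
  digit_eq_of_mem_Ico le_rfl (by positivity) <| by
    simpa using mul_two_pow_mem_Ico_of_mem_Q1 hk hj hz i

lemma mem_Omega_iff_of_mem_Q1 [NeZero n] {j : ℕ} (hk : 1 ≤ k) (hm : 1 ≤ m) (hz : z ∈ Q1 n k m) :
    z ∈ Omega n k j ↔ j = m := by
  have hhalf : (0 : ℤ) < 2 ^ (k - 1) := by positivity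
  constructor
  · rintro ⟨-, hdigits⟩
    obtain ⟨hsmall, hself⟩ := hdigits 0
    rcases lt_trichotomy j m with hlt | heq | hgt
    · exact absurd ((digit_eq_zero_of_mem_Q1 hk hlt hz 0).symm.trans hself) hhalf.ne
    · exact heq
    · exact absurd (digit_self_of_mem_Q1 hk hz 0) (hsmall m hm hgt).ne
  · rintro rfl
    refine ⟨fun i => by simpa using mul_two_pow_mem_Ico_of_mem_Q1 hk hm hz i, fun i => ⟨?_, ?_⟩⟩
    · intro j' _ hj'
      rwa [digit_eq_zero_of_mem_Q1 hk hj' hz i]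
    · exact digit_self_of_mem_Q1 hk hz i

lemma wk_of_mem_Q1 [NeZero n] (hk : 1 ≤ k) (hm : 1 ≤ m) (hz : z ∈ Q1 n k m) :
    wk n k z = ((2 : ℝ≥0∞) ^ (k * n) / (2 ^ ((k - 1) * n) + 1)) ^ m := by
  have hΩ (j : ℕ) := mem_Omega_iff_of_mem_Q1 (j := j) hk hm hz
  rw [wk, tsum_eq_single (m - 1), Nat.sub_add_cancel hm, indicator_of_mem ((hΩ m).2 rfl)]
  exact fun j hj => indicator_of_notMem (fun h => hj (by have := (hΩ _).1 h; omega)) _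

lemma pairwise_disjoint_Q1 [NeZero n] (hk : 1 ≤ k) :
    Pairwise (Disjoint on fun m => Q1 n k (m + 1)) := by
  intro m m' hne
  refine disjoint_left.2 fun z hz hz' => hne ?_
  have hΩ := (mem_Omega_iff_of_mem_Q1 hk (by omega) hz').2 rfl
  have := (mem_Omega_iff_of_mem_Q1 hk (by omega) hz).1 hΩ
  omega

end Digits

section Pieces

/-- The cube `2⃗^k + Q_1^m(k)`; for `k, m ≥ 3` these are the pieces of the support of `bigW n`. -/
def shiftedQ1 (n k m : ℕ) : Set (Fin n → ℝ) := {x | (fun i => x i - (2 : ℝ) ^ k) ∈ Q1 n k m}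

/-- The constant value of `bigW n` on `shiftedQ1 n k m`, for `k, m ≥ 3`. -/
def bigWLevel (n k m : ℕ) : ℝ≥0∞ :=
  Ak n k * ((2 : ℝ≥0∞) ^ (k * n) / (2 ^ ((k - 1) * n) + 1)) ^ m

variable {n k k' m m' : ℕ} {x y : Fin n → ℝ}

lemma shiftedQ1_eq_cube (n k m : ℕ) :
    shiftedQ1 n k m =
      Cube n (fun _ => (2 : ℝ) ^ k + 2 ^ (-(k * (m - 1) : ℤ) - 1)) (2 ^ (-(k * m : ℤ))) := by
  ext x
  simp only [shiftedQ1, Q1, Cube, mem_ofPred_eq, mem_univ_pi, mem_Ico, le_sub_iff_add_le',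
    sub_lt_iff_lt_add', add_assoc]

lemma measurableSet_shiftedQ1 (n k m : ℕ) : MeasurableSet (shiftedQ1 n k m) := by
  rw [shiftedQ1_eq_cube]
  exact measurableSet_cube _ _

lemma volume_shiftedQ1 (n k m : ℕ) :
    volume (shiftedQ1 n k m) = ENNReal.ofReal ((2 ^ (k * m))⁻¹) ^ n := by
  rw [shiftedQ1_eq_cube, volume_cube, zpow_neg]
  exact_mod_cast rfl

lemma le_dist_of_mem_shiftedQ1_of_lt [NeZero n] (hk : 2 ≤ k) (hm : m < m')
    (hx : x ∈ shiftedQ1 n k m) (hy : y ∈ shiftedQ1 n k m') : (2 ^ (k * m))⁻¹ ≤ dist x y := by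
  have hk4 : (2 : ℝ) ^ 2 ≤ 2 ^ k := pow_le_pow_right₀ one_le_two hk
  have hs : (0 : ℝ) < 2 ^ (k * m) := by positivity
  have hxlow := (mem_Q1_iff.1 hx 0).1
  have hyup := (mul_two_pow_mem_Ico_of_mem_Q1 (by omega) hm hy 0).2
  have hgap : 1 ≤ (x 0 - y 0) * 2 ^ (k * m) := by linarith
  calc (2 ^ (k * m))⁻¹ ≤ x 0 - y 0 := by rwa [← one_div, div_le_iff₀ hs]
    _ ≤ dist (x 0) (y 0) := le_abs_self _
    _ ≤ dist x y := dist_le_pi_dist x y 0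

lemma mem_Ico_of_mem_shiftedQ1 (hk : 1 ≤ k) (hm : 1 ≤ m) (hx : x ∈ shiftedQ1 n k m) (i : Fin n) :
    x i ∈ Ico ((2 : ℝ) ^ k) (2 ^ k + 1) := by
  have h : x i - 2 ^ k ∈ Ico (0 : ℝ) 1 := by
    simpa using mul_two_pow_mem_Ico_of_mem_Q1 hk hm hx i
  exact ⟨by linarith [h.1], by linarith [h.2]⟩

lemma two_pow_le_four_mul_dist_of_lt [NeZero n] (hk : 1 ≤ k) (hm : 1 ≤ m) (hm' : 1 ≤ m')
    (hkk' : k < k') (hx : x ∈ shiftedQ1 n k m) (hy : y ∈ shiftedQ1 n k' m') :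
    2 ^ k' ≤ 4 * dist x y := by
  have hxup := (mem_Ico_of_mem_shiftedQ1 hk hm hx 0).2
  have hylow := (mem_Ico_of_mem_shiftedQ1 (by omega) hm' hy 0).1
  have hdouble : (2 : ℝ) * 2 ^ k ≤ 2 ^ k' := by
    rw [← pow_succ']
    exact pow_le_pow_right₀ one_le_two hkk'
  have hk'4 : (2 : ℝ) ^ 2 ≤ 2 ^ k' := pow_le_pow_right₀ one_le_two (by omega)
  have hdist : y 0 - x 0 ≤ dist x y :=
    (le_abs_self _).trans ((dist_comm _ _).trans_le (dist_le_pi_dist x y 0))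
  linarith

lemma two_pow_le_four_mul_dist_of_ne [NeZero n] (hk : 1 ≤ k) (hk' : 1 ≤ k') (hm : 1 ≤ m)
    (hm' : 1 ≤ m') (hne : k ≠ k') (hx : x ∈ shiftedQ1 n k m) (hy : y ∈ shiftedQ1 n k' m') :
    2 ^ k' ≤ 4 * dist x y := by
  rcases hne.lt_or_gt with hlt | hgt
  · exact two_pow_le_four_mul_dist_of_lt hk hm hm' hlt hx hy
  · calc (2 : ℝ) ^ k' ≤ 2 ^ k := pow_le_pow_right₀ one_le_two hgt.le
      _ ≤ 4 * dist x y := by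
        rw [dist_comm]
        exact two_pow_le_four_mul_dist_of_lt hk' hm' hm hgt hy hx

end Pieces

section Weight

variable {n k m : ℕ} [NeZero n] {x : Fin n → ℝ}

lemma indicator_Gamma_eq_tsum (hk : 1 ≤ k) (z : Fin n → ℝ) :
    (Gamma n k).indicator (fun z => Ak n k * wk n k z) z =
      ∑' m : ℕ, (Q1 n k (m + 3)).indicator (fun _ => bigWLevel n k (m + 3)) z := by
  by_cases hz : z ∈ Gamma n k
  · obtain ⟨m, hm⟩ := mem_iUnion.1 hz
    have hdisj : Pairwise (Disjoint on fun m => Q1 n k (m + 3)) :=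
      (pairwise_disjoint_Q1 hk).comp_of_injective (add_left_injective 2)
    rw [indicator_of_mem hz, tsum_indicator_of_mem hdisj _ hm, wk_of_mem_Q1 hk (by omega) hm,
      bigWLevel]
  · rw [indicator_of_notMem hz, eq_comm, ENNReal.tsum_eq_zero]
    exact fun m => indicator_of_notMem (fun hm => hz (mem_iUnion.2 ⟨m, hm⟩)) _

lemma bigW_eq_tsum (x : Fin n → ℝ) :
    bigW n x = ∑' (k : ℕ) (m : ℕ),
      (shiftedQ1 n (k + 3) (m + 3)).indicator (fun _ => bigWLevel n (k + 3) (m + 3)) x :=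
  tsum_congr fun _ => indicator_Gamma_eq_tsum (by omega) _

lemma exists_mem_shiftedQ1_of_bigW_ne_zero (hx : bigW n x ≠ 0) :
    ∃ k m, x ∈ shiftedQ1 n (k + 3) (m + 3) := by
  contrapose! hx
  simp only [bigW_eq_tsum, ENNReal.tsum_eq_zero]
  exact fun k m => indicator_of_notMem (hx k m) _

lemma pairwise_disjoint_shifted_Gamma :
    Pairwise (Disjoint on fun k : ℕ =>
      {x : Fin n → ℝ | (fun i => x i - (2 : ℝ) ^ (k + 3)) ∈ Gamma n (k + 3)}) := by
  intro k k' hne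
  refine disjoint_left.2 fun x hx hx' => ?_
  obtain ⟨m, hm⟩ := mem_iUnion.1 hx
  obtain ⟨m', hm'⟩ := mem_iUnion.1 hx'
  have hsep : (2 : ℝ) ^ (k' + 3) ≤ 4 * dist x x :=
    two_pow_le_four_mul_dist_of_ne (by omega) (by omega) (by omega) (by omega) (by omega) hm hm'
  rw [dist_self, mul_zero] at hsep
  exact hsep.not_gt (by positivity)

lemma bigW_of_mem_shiftedQ1 (hx : x ∈ shiftedQ1 n (k + 3) (m + 3)) :
    bigW n x = bigWLevel n (k + 3) (m + 3) := by
  calc bigW n x = Ak n (k + 3) * wk n (k + 3) (fun i => x i - (2 : ℝ) ^ (k + 3)) :=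
        tsum_indicator_of_mem pairwise_disjoint_shifted_Gamma
          (fun k x => Ak n (k + 3) * wk n (k + 3) fun i => x i - (2 : ℝ) ^ (k + 3))
          (mem_iUnion.2 ⟨m, hx⟩)
    _ = bigWLevel n (k + 3) (m + 3) := by
        rw [wk_of_mem_Q1 (by omega) (by omega) hx, bigWLevel]

lemma setLIntegral_bigW (s : Set (Fin n → ℝ)) :
    ∫⁻ y in s, bigW n y = ∑' (k : ℕ) (m : ℕ),
      bigWLevel n (k + 3) (m + 3) * volume (shiftedQ1 n (k + 3) (m + 3) ∩ s) := by
  have hmeas (k m : ℕ) : Measurable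
      ((shiftedQ1 n (k + 3) (m + 3)).indicator fun _ => bigWLevel n (k + 3) (m + 3)) :=
    measurable_const.indicator (measurableSet_shiftedQ1 n _ _)
  simp only [bigW_eq_tsum]
  rw [lintegral_tsum fun k => (Measurable.tsum (hmeas k)).aemeasurable]
  refine tsum_congr fun k => ?_
  rw [lintegral_tsum fun m => (hmeas k m).aemeasurable]
  refine tsum_congr fun m => ?_
  rw [lintegral_indicator_const (measurableSet_shiftedQ1 n _ _),
    Measure.restrict_apply (measurableSet_shiftedQ1 n _ _)]

end Weight

section Levels

variable {n k : ℕ} [NeZero n]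

lemma one_le_two_pow_div (hk : 1 ≤ k) :
    1 ≤ (2 : ℝ≥0∞) ^ (k * n) / (2 ^ ((k - 1) * n) + 1) := by
  rw [ENNReal.le_div_iff_mul_le (by simp) (Or.inl (by finiteness)), one_mul]
  have hlt : (k - 1) * n < k * n := Nat.mul_lt_mul_of_pos_right (by omega) (NeZero.pos n)
  exact_mod_cast Nat.succ_le_of_lt (Nat.pow_lt_pow_right one_lt_two hlt)

lemma bigWLevel_mono (hk : 1 ≤ k) : Monotone (bigWLevel n k) := by
  intro m m' hm
  unfold bigWLevel
  gcongr
  exact one_le_two_pow_div hk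

lemma one_le_bigWLevel (hk : 1 ≤ k) (m : ℕ) : 1 ≤ bigWLevel n k m := by
  have hA : 1 ≤ Ak n k := one_le_mul (one_le_pow_of_one_le' one_le_two _)
    (one_le_pow_of_one_le' le_add_self _)
  exact one_le_mul hA (one_le_pow_of_one_le' (one_le_two_pow_div hk) m)

end Levels

section Masses

lemma bigWLevel_mul_volume (n k m : ℕ) : bigWLevel n k m * volume (shiftedQ1 n k m) =
    Ak n k * ((2 ^ ((k - 1) * n) + 1)⁻¹) ^ m := by
  have hvol : volume (shiftedQ1 n k m) = ((2 ^ (k * n))⁻¹) ^ m := by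
    rw [volume_shiftedQ1, ENNReal.ofReal_inv_of_pos (by positivity),
      ENNReal.ofReal_pow zero_le_two, ENNReal.ofReal_ofNat, ENNReal.inv_pow, ENNReal.inv_pow,
      ← pow_mul, ← pow_mul, mul_right_comm]
  rw [hvol, bigWLevel, mul_assoc, ← mul_pow, div_eq_mul_inv, mul_right_comm,
    ENNReal.mul_inv_cancel (by positivity) (by finiteness), one_mul]

lemma bigWLevel_mul_volume_succ_le (n k m : ℕ) :
    bigWLevel n k (m + 1) * volume (shiftedQ1 n k (m + 1)) ≤
      2⁻¹ * (bigWLevel n k m * volume (shiftedQ1 n k m)) := by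
  have hD : (2 : ℝ≥0∞) ≤ 2 ^ ((k - 1) * n) + 1 := by
    calc (2 : ℝ≥0∞) = 1 + 1 := one_add_one_eq_two.symm
      _ ≤ 2 ^ ((k - 1) * n) + 1 := by gcongr; exact one_le_pow_of_one_le' one_le_two _
  rw [bigWLevel_mul_volume, bigWLevel_mul_volume, pow_succ', mul_left_comm]
  gcongr

/-- The factor `A_k` is chosen to make this mass comparable to `1`. -/
lemma bigWLevel_mul_volume_three_le_one (n k : ℕ) :
    bigWLevel n k 3 * volume (shiftedQ1 n k 3) ≤ 1 := by
  rw [bigWLevel_mul_volume, ← ENNReal.inv_pow, ← div_eq_mul_inv]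
  refine ENNReal.div_le_of_le_mul ?_
  rw [one_mul, Ak, pow_succ' _ 2]
  gcongr
  exact le_self_add

lemma tsum_bigWLevel_mul_volume_inter_le_two (n k : ℕ) (s : Set (Fin n → ℝ)) :
    ∑' m, bigWLevel n k (m + 3) * volume (shiftedQ1 n k (m + 3) ∩ s) ≤ 2 :=
  calc ∑' m, bigWLevel n k (m + 3) * volume (shiftedQ1 n k (m + 3) ∩ s)
      ≤ 2 * (bigWLevel n k (0 + 3) * volume (shiftedQ1 n k (0 + 3))) :=
        tsum_le_two_mul_of_halving
          (c := fun m => bigWLevel n k (m + 3) * volume (shiftedQ1 n k (m + 3)))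
          (fun m => bigWLevel_mul_volume_succ_le n k (m + 3))
          (fun m => by gcongr; exact inter_subset_left) (by simp)
    _ ≤ 2 * 1 := by gcongr; exact bigWLevel_mul_volume_three_le_one n k
    _ = 2 := mul_one 2

end Masses

section UpperBound

variable {n k m : ℕ} [NeZero n] {x a : Fin n → ℝ} {l : ℝ}

lemma tsum_bigWLevel_mul_volume_inter_cube_le_of_mem (hk : 2 ≤ k) (hl : 0 ≤ l)
    (hxQ : x ∈ Cube n a l) (hx : x ∈ shiftedQ1 n k (m + 3)) :
    ∑' j, bigWLevel n k (j + 3) * volume (shiftedQ1 n k (j + 3) ∩ Cube n a l) ≤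
      2 * (bigWLevel n k (m + 3) * volume (Cube n a l)) := by
  classical
  have hmeets : ∃ j, (shiftedQ1 n k (j + 3) ∩ Cube n a l).Nonempty := ⟨m, x, hx, hxQ⟩
  have hvanish {j : ℕ} (hj : ¬(shiftedQ1 n k (j + 3) ∩ Cube n a l).Nonempty) :
      bigWLevel n k (j + 3) * volume (shiftedQ1 n k (j + 3) ∩ Cube n a l) = 0 := by
    rw [not_nonempty_iff_eq_empty.1 hj, measure_empty, mul_zero]
  obtain ⟨N, ⟨y, hy, hyQ⟩, hmin⟩ :
      ∃ N, (shiftedQ1 n k (N + 3) ∩ Cube n a l).Nonempty ∧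
        ∀ j < N, ¬(shiftedQ1 n k (j + 3) ∩ Cube n a l).Nonempty :=
    ⟨Nat.find hmeets, Nat.find_spec hmeets, fun j => Nat.find_min hmeets⟩
  have hNm : N ≤ m := not_lt.1 fun hlt => hmin m hlt ⟨x, hx, hxQ⟩
  have hlevel : bigWLevel n k (N + 3) ≤ bigWLevel n k (m + 3) :=
    bigWLevel_mono (by omega) (by omega)
  by_cases hsecond : ∃ j > N, (shiftedQ1 n k (j + 3) ∩ Cube n a l).Nonempty
  · obtain ⟨j, hNj, z, hz, hzQ⟩ := hsecond
    have hvol : volume (shiftedQ1 n k (N + 3)) ≤ volume (Cube n a l) := by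
      rw [volume_shiftedQ1]
      exact ofReal_pow_le_volume_cube hl hyQ hzQ
        (le_dist_of_mem_shiftedQ1_of_lt hk (by omega) hy hz)
    calc _ ≤ 2 * (bigWLevel n k (N + 3) * volume (shiftedQ1 n k (N + 3))) :=
          tsum_le_two_mul_of_halving
            (c := fun j => bigWLevel n k (j + 3) * volume (shiftedQ1 n k (j + 3)))
            (fun j => bigWLevel_mul_volume_succ_le n k (j + 3))
            (fun j => by gcongr; exact inter_subset_left) (fun j hj => hvanish (hmin j hj))
      _ ≤ 2 * (bigWLevel n k (m + 3) * volume (Cube n a l)) := by gcongr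
  · rw [tsum_eq_single N fun j hj => hvanish fun h => ?_]
    · calc _ ≤ bigWLevel n k (m + 3) * volume (Cube n a l) := by gcongr; exact inter_subset_right
        _ ≤ 2 * (bigWLevel n k (m + 3) * volume (Cube n a l)) :=
          le_mul_of_one_le_left zero_le one_le_two
    · exact hj.lt_or_gt.elim (fun hlt => hmin j hlt h) fun hgt => hsecond ⟨j, hgt, h⟩

lemma tsum_bigWLevel_mul_volume_inter_cube_le_of_ne {k' : ℕ} (hk : 1 ≤ k) (hm : 1 ≤ m)
    (hne : k ≠ k' + 3) (hl : 0 ≤ l) (hxQ : x ∈ Cube n a l) (hx : x ∈ shiftedQ1 n k m) :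
    ∑' j, bigWLevel n (k' + 3) (j + 3) * volume (shiftedQ1 n (k' + 3) (j + 3) ∩ Cube n a l) ≤
      2⁻¹ ^ k' * (2 * volume (Cube n a l)) := by
  by_cases hmeets : ∃ j, (shiftedQ1 n (k' + 3) (j + 3) ∩ Cube n a l).Nonempty
  · obtain ⟨j, y, hy, hyQ⟩ := hmeets
    have hdist : (2 : ℝ) ^ k' ≤ dist x y := by
      have hsep : (2 : ℝ) ^ (k' + 3) ≤ 4 * dist x y :=
        two_pow_le_four_mul_dist_of_ne hk (by omega) hm (by omega) hne hx hy
      rw [pow_add] at hsep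
      linarith [show (0 : ℝ) < 2 ^ k' by positivity]
    have hvol : (2 : ℝ≥0∞) ^ k' ≤ volume (Cube n a l) :=
      calc (2 : ℝ≥0∞) ^ k' ≤ (2 ^ k') ^ n :=
            le_self_pow (one_le_pow_of_one_le' one_le_two _) (NeZero.ne n)
        _ = ENNReal.ofReal (2 ^ k') ^ n := by
            rw [ENNReal.ofReal_pow zero_le_two, ENNReal.ofReal_ofNat]
        _ ≤ volume (Cube n a l) := ofReal_pow_le_volume_cube hl hxQ hyQ hdist
    calc _ ≤ 2 := tsum_bigWLevel_mul_volume_inter_le_two n (k' + 3) _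
      _ = 2⁻¹ ^ k' * (2 * 2 ^ k') := by
          rw [mul_left_comm, ← mul_pow, ENNReal.inv_mul_cancel two_ne_zero ofNat_ne_top, one_pow,
            mul_one]
      _ ≤ 2⁻¹ ^ k' * (2 * volume (Cube n a l)) := by gcongr
  · simp only [not_exists, not_nonempty_iff_eq_empty] at hmeets
    simp [hmeets]

lemma setLIntegral_bigW_cube_le (hl : 0 ≤ l) (hxQ : x ∈ Cube n a l)
    (hx : x ∈ shiftedQ1 n (k + 3) (m + 3)) :
    ∫⁻ y in Cube n a l, bigW n y ≤ 6 * bigWLevel n (k + 3) (m + 3) * volume (Cube n a l) := by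
  set V := bigWLevel n (k + 3) (m + 3)
  set L := volume (Cube n a l)
  calc ∫⁻ y in Cube n a l, bigW n y
      = ∑' (k' : ℕ) (j : ℕ), bigWLevel n (k' + 3) (j + 3) *
          volume (shiftedQ1 n (k' + 3) (j + 3) ∩ Cube n a l) := setLIntegral_bigW _
    _ ≤ 2 * (V * L) + ∑' k' : ℕ, 2⁻¹ ^ k' * (2 * L) :=
        (tsum_le_add_tsum_of_forall_ne k fun k' hk' =>
          tsum_bigWLevel_mul_volume_inter_cube_le_of_ne (by omega) (by omega) (by omega)
            hl hxQ hx).trans <| by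
          gcongr
          exact tsum_bigWLevel_mul_volume_inter_cube_le_of_mem (by omega) hl hxQ hx
    _ = 2 * (V * L) + 2 * (2 * L) := by
        rw [ENNReal.tsum_mul_right, ENNReal.tsum_geometric, ENNReal.one_sub_inv_two, inv_inv]
    _ ≤ 2 * (V * L) + 2 * (2 * (V * L)) := by
        gcongr
        exact le_mul_of_one_le_left zero_le (one_le_bigWLevel (by omega) _)
    _ = 6 * V * L := by ring

end UpperBound

theorem maximal_bigW_comparable_general {n : ℕ} [NeZero n] {x : Fin n → ℝ} (hx : bigW n x ≠ 0) :
    bigW n x ≤ MaxFn (bigW n) x ∧ MaxFn (bigW n) x ≤ 6 * bigW n x := by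
  obtain ⟨k, m, hxP⟩ := exists_mem_shiftedQ1_of_bigW_ne_zero hx
  rw [bigW_of_mem_shiftedQ1 hxP]
  constructor
  · have hconst : EqOn (bigW n) (fun _ => bigWLevel n (k + 3) (m + 3))
        (shiftedQ1 n (k + 3) (m + 3)) := fun y hy => bigW_of_mem_shiftedQ1 hy
    rw [shiftedQ1_eq_cube] at hxP hconst
    exact le_maxFn_of_eqOn_cube (by positivity) hxP hconst
  · exact maxFn_le fun a l hl hxQ => setLIntegral_bigW_cube_le hl.le hxQ hxP

/-- For `n ≥ 1` there are constants `0 < c ≤ C < ∞` (depending only on `n`)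
such that `c · w(x) ≤ M(w)(x) ≤ C · w(x)` for almost every `x ∈ supp(w)`. -/
theorem maximal_bigW_comparable (n : ℕ) (hn : 1 ≤ n) :
    ∃ c C : ℝ≥0∞, 0 < c ∧ c ≤ C ∧ C < ∞ ∧
      ∀ᵐ x : Fin n → ℝ, bigW n x ≠ 0 →
        c * bigW n x ≤ MaxFn (bigW n) x ∧ MaxFn (bigW n) x ≤ C * bigW n x := by
  have : NeZero n := ⟨by omega⟩
  refine ⟨1, 6, one_pos, by norm_num, by finiteness, .of_forall fun x hx => ?_⟩
  simpa only [one_mul] using maximal_bigW_comparable_general hx
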